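/- Let n ∈ ℕ, x ∈ {0,1}^n (encoded as x : Fin n → Fin 2), and p₊, p₋ ∈ [0,1]. Set θ₀ = 2·arccos(√(1−p₊)) and θ_D = −2(arccos(√(1−p₊)) + arccos(√(1−p₋))). Let DL(x) be the tensor product of the matrices RY(θ₀ + x_m·θ_D) for m = 0,…,n−1. Then DL(x) applied to the basis vector e_x equals the vector whose entry at index x̃ ∈ {0,1}^n is √(φ(x̃|x)); that is, DL(x)·e_x = Σ_{x̃} √(φ(x̃|x)) · e_{x̃}. -/

import Mathlib

/-! Writing `P_F(b)` for the flip probability of a bit `b`, the angle loaded on that bit is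
`(-1)ᵇ · 2 arccos √(1 - P_F(b))`. The sign cancels the minus sign in the second column of the
rotation, so column `b` holds `√(1 - P_F(b))` at the preserved bit and `√P_F(b)` at the flipped
one. Applying the tensor product to `e_x` multiplies such entries, and the product of the square
roots is the square root of the product. -/

open Matrix

/-- The single-qubit rotation `RY θ` as a complex 2×2 matrix. -/
noncomputable def RY (θ : ℝ) : Matrix (Fin 2) (Fin 2) ℂ :=
  !![(Real.cos (θ / 2) : ℂ), -(Real.sin (θ / 2) : ℂ);
     (Real.sin (θ / 2) : ℂ), (Real.cos (θ / 2) : ℂ)]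

/-- Tensor product of `n` 2×2 complex matrices, indexed by `Fin n → Fin 2`. -/
noncomputable def tensorProd {n : ℕ} (A : Fin n → Matrix (Fin 2) (Fin 2) ℂ) :
    Matrix (Fin n → Fin 2) (Fin n → Fin 2) ℂ :=
  fun i j => ∏ m, A m (i m) (j m)

/-- The standard basis vector of `ℂ^(Fin n → Fin 2)` supported at `x`. -/
noncomputable def basisVec {n : ℕ} (x : Fin n → Fin 2) : (Fin n → Fin 2) → ℂ :=
  Pi.single x 1

/-- The sparsity-aware PMF `φ(x̃ | x; p₊, p₋)`:
each bit flips with probability `p₊` if it is `0` and `p₋` if it is `1`. -/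
def phi {n : ℕ} (pPlus pMinus : ℝ) (x xt : Fin n → Fin 2) : ℝ :=
  ∏ j, (if xt j ≠ x j then (if x j = 0 then pPlus else pMinus)
        else 1 - (if x j = 0 then pPlus else pMinus))

/-- The flip probability `P_F` of a bit `b`: `p₊` if `b = 0` and `p₋` if `b = 1`. -/
def flipProb (pPlus pMinus : ℝ) (b : Fin 2) : ℝ :=
  if b = 0 then pPlus else pMinus

/-- The transition probability from the bit `b` to the bit `c` when `b` flips with probability
`p`; it is one factor of the PMF `phi`. -/
def transitionProb (p : ℝ) (b c : Fin 2) : ℝ :=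
  if c ≠ b then p else 1 - p

/-- The angle `θ₀ + b θ_D` by which the loader rotates a qubit whose input bit is `b`. -/
noncomputable def loaderAngle (pPlus pMinus : ℝ) (b : Fin 2) : ℝ :=
  2 * Real.arccos (Real.sqrt (1 - pPlus)) +
    (b : ℝ) * (-2 * (Real.arccos (Real.sqrt (1 - pPlus)) + Real.arccos (Real.sqrt (1 - pMinus))))

theorem flipProb_mem {s : Set ℝ} {pPlus pMinus : ℝ} (hPlus : pPlus ∈ s) (hMinus : pMinus ∈ s)
    (b : Fin 2) : flipProb pPlus pMinus b ∈ s := by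
  unfold flipProb
  split_ifs
  exacts [hPlus, hMinus]

theorem transitionProb_nonneg {p : ℝ} (hp : p ∈ Set.Icc 0 1) (b c : Fin 2) :
    0 ≤ transitionProb p b c := by
  unfold transitionProb
  split_ifs
  exacts [hp.1, sub_nonneg.2 hp.2]

theorem phi_eq_prod_transitionProb {n : ℕ} (pPlus pMinus : ℝ) (x y : Fin n → Fin 2) :
    phi pPlus pMinus x y = ∏ j, transitionProb (flipProb pPlus pMinus (x j)) (x j) (y j) :=
  rfl

theorem sqrt_phi {n : ℕ} {pPlus pMinus : ℝ} (hPlus : pPlus ∈ Set.Icc 0 1)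
    (hMinus : pMinus ∈ Set.Icc 0 1) (x y : Fin n → Fin 2) :
    Real.sqrt (phi pPlus pMinus x y) =
      ∏ j, Real.sqrt (transitionProb (flipProb pPlus pMinus (x j)) (x j) (y j)) := by
  rw [phi_eq_prod_transitionProb]
  exact Real.sqrt_prod _ fun j _ => transitionProb_nonneg (flipProb_mem hPlus hMinus (x j)) _ _

theorem tensorProd_mulVec_basisVec {n : ℕ} (A : Fin n → Matrix (Fin 2) (Fin 2) ℂ)
    (x : Fin n → Fin 2) :
    tensorProd A *ᵥ basisVec x = fun y => ∏ m, A m (y m) (x m) :=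
  mulVec_single_one _ x

theorem cos_arccos_sqrt {q : ℝ} (hq : q ≤ 1) :
    Real.cos (Real.arccos (Real.sqrt q)) = Real.sqrt q :=
  Real.cos_arccos (by linarith [Real.sqrt_nonneg q]) (Real.sqrt_le_one.2 hq)

theorem sin_arccos_sqrt {q : ℝ} (hq : 0 ≤ q) :
    Real.sin (Real.arccos (Real.sqrt q)) = Real.sqrt (1 - q) := by
  rw [Real.sin_arccos, Real.sq_sqrt hq]

theorem RY_neg_one_pow_mul_apply (θ : ℝ) (b c : Fin 2) :
    RY ((-1) ^ (b : ℕ) * θ) c b =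
      ((if c ≠ b then Real.sin (θ / 2) else Real.cos (θ / 2) : ℝ) : ℂ) := by
  fin_cases b <;> fin_cases c <;> simp [RY, neg_div]

theorem RY_neg_one_pow_mul_arccos_apply {p : ℝ} (hp : p ∈ Set.Icc 0 1) (b c : Fin 2) :
    RY ((-1) ^ (b : ℕ) * (2 * Real.arccos (Real.sqrt (1 - p)))) c b =
      (Real.sqrt (transitionProb p b c) : ℂ) := by
  rw [RY_neg_one_pow_mul_apply, mul_div_cancel_left₀ _ two_ne_zero,
    cos_arccos_sqrt (sub_le_self 1 hp.1), sin_arccos_sqrt (sub_nonneg.2 hp.2), sub_sub_cancel,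
    transitionProb, apply_ite Real.sqrt]

theorem loaderAngle_eq_neg_one_pow_mul (pPlus pMinus : ℝ) (b : Fin 2) :
    loaderAngle pPlus pMinus b =
      (-1) ^ (b : ℕ) * (2 * Real.arccos (Real.sqrt (1 - flipProb pPlus pMinus b))) := by
  unfold loaderAngle flipProb
  fin_cases b
  · simp
  · simp only [Fin.mk_one, Nat.cast_one, one_ne_zero, if_false]
    ring

theorem RY_loaderAngle_apply {pPlus pMinus : ℝ} (hPlus : pPlus ∈ Set.Icc 0 1)
    (hMinus : pMinus ∈ Set.Icc 0 1) (b c : Fin 2) :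
    RY (loaderAngle pPlus pMinus b) c b =
      (Real.sqrt (transitionProb (flipProb pPlus pMinus b) b c) : ℂ) := by
  rw [loaderAngle_eq_neg_one_pow_mul]
  exact RY_neg_one_pow_mul_arccos_apply (flipProb_mem hPlus hMinus b) b c

theorem distLoader_on_ex {n : ℕ} (x : Fin n → Fin 2) (pPlus pMinus : ℝ)
    (hp0 : 0 ≤ pPlus) (hp1 : pPlus ≤ 1) (hm0 : 0 ≤ pMinus) (hm1 : pMinus ≤ 1) :
    (tensorProd (fun m => RY (2 * Real.arccos (Real.sqrt (1 - pPlus)) +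
        (x m : ℝ) * (-2 * (Real.arccos (Real.sqrt (1 - pPlus)) +
          Real.arccos (Real.sqrt (1 - pMinus))))))) *ᵥ basisVec x =
      fun xt => (Real.sqrt (phi pPlus pMinus x xt) : ℂ) := by
  funext y
  rw [tensorProd_mulVec_basisVec, sqrt_phi ⟨hp0, hp1⟩ ⟨hm0, hm1⟩, Complex.ofReal_prod]
  exact Finset.prod_congr rfl fun m _ =>
    RY_loaderAngle_apply ⟨hp0, hp1⟩ ⟨hm0, hm1⟩ (x m) (y m)
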